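/- For all integers d ≥ 0 and t ≥ 0, ∑_{i=0}^{d} A(d+1,i) · (i − d/2)^{2t} ≤ ((d+2)/12)^t · (2t−1)!! · (d+1)!, where (2t−1)!! = (2t−1)(2t−3)⋯3·1 (and (−1)!! = 1). -/

import Mathlib

open Finset

/-- The number of descents of a permutation of `Fin n`. -/
def descentCount {n : ℕ} (σ : Equiv.Perm (Fin n)) : ℕ :=
  (Finset.univ.filter fun i : Fin n =>
    ∃ h : (i : ℕ) + 1 < n, σ ⟨(i : ℕ) + 1, h⟩ < σ i).card

/-- The Eulerian number `A(n,k)`: the number of permutations of `{1,…,n}` with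
exactly `k` descents. -/
def eulerian (n k : ℕ) : ℕ :=
  (Finset.univ.filter fun σ : Equiv.Perm (Fin n) => descentCount σ = k).card

/-! Inserting a new largest letter keeps the number of descents if it goes to the end of the word
or into a descent, and raises it by one otherwise. Hence, for a uniformly random permutation of
`n + 1` letters and `N = n + 2`, the centred descent number `x` moves to `x ∓ 1 / 2` with
probabilities `1 / 2 ± x / N`. Expanding by the binomial theorem expresses the moments at `n + 1`
through those at `n`, and the bound follows by induction on `n`, the variance `N / 12` growing by
the factor `1 + 1 / N`.

* If `2 * t ≤ N`, all coefficients of the recursion are nonnegative. Replacing the moments by their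
  Gaussian bounds and integrating by parts leaves at most `1 + t / N ≤ (1 + 1 / N) ^ t`.
* If `N ≤ 2 * t ≤ 3 * N + 2`, only the leading coefficient is nonpositive. Dropping its term is
  affordable: the remaining sum is compared with the first terms of `(1 + 1 / N) ^ t`, which comes
  down to a cubic inequality valid for `N ≥ 6`.
* For larger `t` the crude bound `|x| ≤ n / 2` makes the moments at `n` grow more slowly in `t`
  than the Gaussian ones, so induction on `t` applies.

For `n ≤ 4` the last argument settles all but finitely many moments.
-/

section Words

variable {α : Type*}

/-- The word obtained from `w` by inserting the letter `a` so that it occupies position `p`. -/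
def insertLetter (p : ℕ) (a : α) (w : ℕ → α) (i : ℕ) : α :=
  if i < p then w i else if i = p then a else w (i - 1)

lemma insertLetter_of_lt {p i : ℕ} (a : α) (w : ℕ → α) (h : i < p) :
    insertLetter p a w i = w i :=
  if_pos h

lemma insertLetter_self (p : ℕ) (a : α) (w : ℕ → α) : insertLetter p a w p = a := by
  simp [insertLetter]

lemma insertLetter_succ_of_le {p i : ℕ} (a : α) (w : ℕ → α) (h : p ≤ i) :
    insertLetter p a w (i + 1) = w i := by
  rw [insertLetter, if_neg (by lia), if_neg (by lia), Nat.add_sub_cancel]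

variable [LinearOrder α]

/-- The number of descents of the word `w 0, …, w n`, which has `n` pairs of adjacent letters. -/
def wordDescentCount (w : ℕ → α) (n : ℕ) : ℕ :=
  n.count fun i => w (i + 1) < w i

lemma wordDescentCount_le (w : ℕ → α) (n : ℕ) : wordDescentCount w n ≤ n :=
  Nat.count_le _

lemma wordDescentCount_succ (w : ℕ → α) (n : ℕ) :
    wordDescentCount w (n + 1) = wordDescentCount w n + if w (n + 1) < w n then 1 else 0 :=
  Nat.count_succ _ _

lemma wordDescentCount_congr {v w : ℕ → α} {n : ℕ} (h : ∀ i ≤ n, v i = w i) :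
    wordDescentCount v n = wordDescentCount w n := by
  simp only [wordDescentCount, Nat.count_eq_card_filter_range]
  refine congrArg card (filter_congr fun i hi => ?_)
  have hi := mem_range.1 hi
  rw [h (i + 1) hi, h i hi.le]

variable {w : ℕ → α} {n : ℕ} {a : α}

lemma wordDescentCount_insertLetter_last (ha : w n < a) :
    wordDescentCount (insertLetter (n + 1) a w) (n + 1) = wordDescentCount w n := by
  rw [wordDescentCount_succ, insertLetter_self, insertLetter_of_lt a w n.lt_succ_self,
    if_neg ha.not_gt, add_zero]
  exact wordDescentCount_congr fun i hi => insertLetter_of_lt a w (Nat.lt_succ_of_le hi)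

lemma wordDescentCount_insertLetter_zero (ha : w 0 < a) :
    wordDescentCount (insertLetter 0 a w) (n + 1) = wordDescentCount w n + 1 := by
  induction n with
  | zero =>
    simp [wordDescentCount, Nat.count_succ, insertLetter_self, insertLetter_succ_of_le, ha]
  | succ n ih =>
    rw [wordDescentCount_succ, ih, wordDescentCount_succ w,
      insertLetter_succ_of_le a w (Nat.zero_le _), insertLetter_succ_of_le a w (Nat.zero_le _),
      add_right_comm]

lemma wordDescentCount_insertLetter_succ {p : ℕ} (hp : p < n) (ha : w p < a)
    (ha' : w (p + 1) < a) :
    wordDescentCount (insertLetter (p + 1) a w) (n + 1) =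
      if w (p + 1) < w p then wordDescentCount w n else wordDescentCount w n + 1 := by
  induction n, hp using Nat.le_induction with
  | base =>
    rw [wordDescentCount_succ, wordDescentCount_insertLetter_last ha, wordDescentCount_succ w,
      insertLetter_succ_of_le a w le_rfl, insertLetter_self, if_pos ha']
    split_ifs <;> rfl
  | succ n hp ih =>
    rw [wordDescentCount_succ, ih, wordDescentCount_succ w,
      insertLetter_succ_of_le a w (by lia), insertLetter_succ_of_le a w hp]
    split_ifs <;> rfl

lemma sum_wordDescentCount_insertLetter {M : Type*} [AddCommMonoid M] (ha : ∀ i ≤ n, w i < a)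
    (f : ℕ → M) :
    ∑ p ∈ range (n + 2), f (wordDescentCount (insertLetter p a w) (n + 1)) =
      (wordDescentCount w n + 1) • f (wordDescentCount w n) +
        (n - wordDescentCount w n + 1) • f (wordDescentCount w n + 1) := by
  have interior : ∀ p ∈ range n, f (wordDescentCount (insertLetter (p + 1) a w) (n + 1)) =
      if w (p + 1) < w p then f (wordDescentCount w n) else f (wordDescentCount w n + 1) := by
    intro p hp
    have hp := mem_range.1 hp
    rw [wordDescentCount_insertLetter_succ hp (ha p hp.le) (ha (p + 1) hp), apply_ite f]
  have card_descents : #{p ∈ range n | w (p + 1) < w p} = wordDescentCount w n :=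
    (Nat.count_eq_card_filter_range _ n).symm
  have card_ascents : #{p ∈ range n | ¬ w (p + 1) < w p} = n - wordDescentCount w n := by
    rw [← card_descents, filter_not, card_sdiff_of_subset (filter_subset _ _), card_range]
  rw [sum_range_succ, wordDescentCount_insertLetter_last (ha n le_rfl), sum_range_succ',
    wordDescentCount_insertLetter_zero (ha 0 n.zero_le), sum_congr rfl interior, sum_ite,
    sum_const, sum_const, card_descents, card_ascents, succ_nsmul, succ_nsmul]
  abel

end Words

section Permutations

variable {n : ℕ}

/-- The one-line word of `σ`, padded with zeros beyond its `n` letters. -/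
def permWord (σ : Equiv.Perm (Fin n)) (i : ℕ) : ℕ :=
  if h : i < n then σ ⟨i, h⟩ else 0

lemma permWord_of_lt (σ : Equiv.Perm (Fin n)) {i : ℕ} (h : i < n) : permWord σ i = σ ⟨i, h⟩ :=
  dif_pos h

lemma descentCount_eq_wordDescentCount (σ : Equiv.Perm (Fin (n + 1))) :
    descentCount σ = wordDescentCount (permWord σ) n := by
  rw [descentCount, wordDescentCount, Nat.count_eq_card_filter_range, card_filter, card_filter,
    Fin.sum_univ_castSucc, sum_range]
  simp only [Fin.val_last, lt_self_iff_false, IsEmpty.exists_iff, if_false, add_zero]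
  refine sum_congr rfl fun i _ => if_congr ?_ rfl rfl
  have hi : (i : ℕ) + 1 < n + 1 := Nat.succ_lt_succ i.is_lt
  rw [permWord_of_lt σ hi, permWord_of_lt σ (Nat.lt_succ_of_lt i.is_lt)]
  exact exists_prop_of_true hi

lemma descentCount_le (σ : Equiv.Perm (Fin (n + 1))) : descentCount σ ≤ n :=
  (descentCount_eq_wordDescentCount σ).trans_le (wordDescentCount_le _ _)

/-- The permutation of `n + 1` points whose one-line word is that of `σ` with the new largest
letter inserted at position `p`. -/
def insertMax (p : Fin (n + 1)) (σ : Equiv.Perm (Fin n)) : Equiv.Perm (Fin (n + 1)) :=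
  ((finSuccEquiv' p).trans σ.optionCongr).trans (finSuccEquiv' (Fin.last n)).symm

lemma insertMax_self (p : Fin (n + 1)) (σ : Equiv.Perm (Fin n)) :
    insertMax p σ p = Fin.last n := by
  simp [insertMax]

lemma insertMax_succAbove (p : Fin (n + 1)) (σ : Equiv.Perm (Fin n)) (i : Fin n) :
    insertMax p σ (p.succAbove i) = (σ i).castSucc := by
  simp [insertMax]

lemma insertMax_uncurry_bijective : Function.Bijective (Function.uncurry (insertMax (n := n))) := by
  rw [Fintype.bijective_iff_injective_and_card]
  refine ⟨?_, by simp [Fintype.card_perm, Nat.factorial_succ]⟩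
  rintro ⟨p, σ⟩ ⟨q, τ⟩ (h : insertMax p σ = insertMax q τ)
  obtain rfl : p = q := (insertMax q τ).injective <| by rw [insertMax_self, ← h, insertMax_self]
  refine congrArg (Prod.mk p) (Equiv.ext fun i => Fin.castSucc_injective n ?_)
  rw [← insertMax_succAbove, h, insertMax_succAbove]

lemma permWord_insertMax (p : Fin (n + 1)) (σ : Equiv.Perm (Fin n)) {i : ℕ} (hi : i ≤ n) :
    permWord (insertMax p σ) i = insertLetter p n (permWord σ) i := by
  rw [permWord_of_lt _ (Nat.lt_succ_of_le hi)]
  obtain h | h := eq_or_ne (⟨i, Nat.lt_succ_of_le hi⟩ : Fin (n + 1)) p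
  · subst h
    rw [insertMax_self, insertLetter_self, Fin.val_last]
  · obtain ⟨j, hj⟩ := Fin.exists_succAbove_eq h
    rw [← hj, insertMax_succAbove, Fin.val_castSucc, ← permWord_of_lt σ j.2]
    obtain hjp | hpj := p.castSucc_lt_or_lt_succ j
    · rw [Fin.succAbove_of_castSucc_lt _ _ hjp, Fin.ext_iff] at hj
      subst hj
      exact (insertLetter_of_lt _ _ hjp).symm
    · rw [Fin.succAbove_of_lt_succ _ _ hpj, Fin.ext_iff] at hj
      subst hj
      exact (insertLetter_succ_of_le _ _ (Nat.le_of_lt_succ hpj)).symm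

variable {M : Type*} [AddCommMonoid M]

/-- The sum of `f (descentCount σ)` over the permutations `σ` of `n + 1` letters. -/
def descentSum (n : ℕ) (f : ℕ → M) : M :=
  ∑ σ : Equiv.Perm (Fin (n + 1)), f (descentCount σ)

lemma descentSum_zero (f : ℕ → M) : descentSum 0 f = f 0 :=
  (Fintype.sum_unique (ι := Equiv.Perm (Fin 1)) _).trans
    (congrArg f (Nat.le_zero.1 (descentCount_le _)))

lemma descentSum_succ (n : ℕ) (f : ℕ → M) :
    descentSum (n + 1) f =
      descentSum n fun k => (k + 1) • f k + (n - k + 1) • f (k + 1) := by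
  simp only [descentSum]
  rw [← insertMax_uncurry_bijective.sum_comp, Fintype.sum_prod_type_right]
  refine sum_congr rfl fun σ _ => ?_
  have letters_lt : ∀ i ≤ n, permWord σ i < n + 1 := fun i hi =>
    (permWord_of_lt σ (Nat.lt_succ_of_le hi)).trans_lt (Fin.is_lt _)
  rw [descentCount_eq_wordDescentCount σ, ← sum_wordDescentCount_insertLetter letters_lt,
    sum_range]
  refine sum_congr rfl fun p _ => congrArg f ?_
  rw [Function.uncurry_apply_pair, descentCount_eq_wordDescentCount]
  exact wordDescentCount_congr fun i hi => permWord_insertMax p σ hi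

lemma sum_eulerian_smul (n : ℕ) (f : ℕ → M) :
    ∑ k ∈ range (n + 1), eulerian (n + 1) k • f k = descentSum n f := by
  have maps_to : ∀ σ ∈ (univ : Finset (Equiv.Perm (Fin (n + 1)))),
      descentCount σ ∈ range (n + 1) := fun σ _ =>
    mem_range.2 (Nat.lt_succ_of_le (descentCount_le σ))
  rw [descentSum, ← sum_fiberwise_of_maps_to maps_to]
  refine sum_congr rfl fun k _ => ?_
  rw [eulerian, ← sum_const]
  exact sum_congr rfl fun σ hσ => by rw [(mem_filter.1 hσ).2]

end Permutations

section Binomial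

lemma sum_range_two_mul_add_one {M : Type*} [AddCommMonoid M] (g : ℕ → M) (m : ℕ) :
    ∑ i ∈ range (2 * m + 1), g i =
      ∑ j ∈ range (m + 1), g (2 * j) + ∑ j ∈ range m, g (2 * j + 1) := by
  induction m with
  | zero => simp
  | succ m ih =>
    rw [mul_add_one, sum_range_succ, sum_range_succ, ih,
      sum_range_succ (fun j => g (2 * j)) (m + 1), sum_range_succ (fun j => g (2 * j + 1)) m,
      mul_add_one]
    abel

lemma add_pow_two_mul {R : Type*} [CommSemiring R] (x y : R) (t : ℕ) :
    (x + y) ^ (2 * t) =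
      ∑ j ∈ range (t + 1), ((2 * t).choose (2 * j) : R) * (y ^ 2) ^ j * x ^ (2 * (t - j)) +
        y * ∑ j ∈ range t,
          ((2 * t).choose (2 * j + 1) : R) * (y ^ 2) ^ j * x ^ (2 * (t - j) - 1) := by
  rw [add_comm x y, add_pow, sum_range_two_mul_add_one, mul_sum]
  congr 1 <;> refine sum_congr rfl fun j _ => ?_
  · rw [Nat.mul_sub]
    ring
  · rw [Nat.mul_sub, Nat.sub_sub]
    ring

/-- The coefficient of `x ^ (2 * (t - j))` in
`(1 / 2 + x / N) * (x - 1 / 2) ^ (2 * t) + (1 / 2 - x / N) * (x + 1 / 2) ^ (2 * t)`, the expected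
`2 * t`-th power after one insertion step from the centred descent number `x`. -/
noncomputable def stepCoeff (N t j : ℕ) : ℝ :=
  (1 / 4) ^ j * ((2 * t).choose (2 * j) - (2 * t).choose (2 * j + 1) / N)

lemma step_pow_two_mul {N : ℕ} (hN : N ≠ 0) (x : ℝ) (t : ℕ) :
    (N / 2 + x) * (x - 1 / 2) ^ (2 * t) + (N / 2 - x) * (x + 1 / 2) ^ (2 * t) =
      N * ∑ j ∈ range (t + 1), stepCoeff N t j * x ^ (2 * (t - j)) := by
  set E := ∑ j ∈ range (t + 1), ((2 * t).choose (2 * j) : ℝ) * (1 / 4) ^ j * x ^ (2 * (t - j))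
    with hE
  set O := ∑ j ∈ range t, ((2 * t).choose (2 * j + 1) : ℝ) * (1 / 4) ^ j * x ^ (2 * (t - j) - 1)
    with hO
  have hadd : (x + 1 / 2) ^ (2 * t) = E + 1 / 2 * O := by
    rw [add_pow_two_mul, show (1 / 2 : ℝ) ^ 2 = 1 / 4 by norm_num]
  have hsub : (x - 1 / 2) ^ (2 * t) = E - 1 / 2 * O := by
    rw [sub_eq_add_neg, add_pow_two_mul, show (-(1 / 2) : ℝ) ^ 2 = 1 / 4 by norm_num]
    ring
  have hxO : x * O =
      ∑ j ∈ range (t + 1), ((2 * t).choose (2 * j + 1) : ℝ) * (1 / 4) ^ j * x ^ (2 * (t - j)) := by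
    rw [sum_range_succ, Nat.choose_succ_self, hO, mul_sum]
    simp only [Nat.cast_zero, zero_mul, add_zero]
    refine sum_congr rfl fun j hj => ?_
    have hj := mem_range.1 hj
    rw [mul_left_comm, mul_pow_sub_one (by lia)]
  have hcoeff : N * ∑ j ∈ range (t + 1), stepCoeff N t j * x ^ (2 * (t - j)) = N * E - x * O := by
    rw [hxO, hE, mul_sum, mul_sum, ← sum_sub_distrib]
    refine sum_congr rfl fun j _ => ?_
    rw [stepCoeff]
    field_simp
  rw [hcoeff, hadd, hsub]
  ring

lemma choose_succ_le_mul_choose {n k N : ℕ} (h : n ≤ k + (k + 1) * N) :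
    n.choose (k + 1) ≤ N * n.choose k := by
  refine Nat.le_of_mul_le_mul_right (c := k + 1) ?_ k.succ_pos
  calc n.choose (k + 1) * (k + 1) = n.choose k * (n - k) := Nat.choose_succ_right_eq n k
    _ ≤ n.choose k * ((k + 1) * N) := Nat.mul_le_mul_left _ (Nat.sub_le_iff_le_add'.2 h)
    _ = N * n.choose k * (k + 1) := by ring

lemma stepCoeff_nonneg {N t j : ℕ} (h : 2 * t ≤ 2 * j + (2 * j + 1) * N) :
    0 ≤ stepCoeff N t j := by
  have hchoose : ((2 * t).choose (2 * j + 1) : ℝ) ≤ (2 * t).choose (2 * j) * N := by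
    exact_mod_cast (choose_succ_le_mul_choose h).trans_eq (Nat.mul_comm _ _)
  exact mul_nonneg (by positivity)
    (sub_nonneg.2 (div_le_of_le_mul₀ N.cast_nonneg (Nat.cast_nonneg _) hchoose))

lemma stepCoeff_zero_right (N t : ℕ) : stepCoeff N t 0 = 1 - 2 * t / N := by
  simp [stepCoeff]

end Binomial

section DescentMoment

/-- The `2 * t`-th central moment of the descent statistic on the permutations of `n + 1` letters,
not divided by the number `(n + 1)!` of permutations. -/
noncomputable def descentMoment (n t : ℕ) : ℝ :=
  descentSum n fun k => ((k : ℝ) - n / 2) ^ (2 * t)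

lemma descentMoment_nonneg (n t : ℕ) : 0 ≤ descentMoment n t :=
  sum_nonneg fun _ _ => (even_two_mul t).pow_nonneg _

lemma descentMoment_zero_right (n : ℕ) : descentMoment n 0 = (n + 1).factorial := by
  simp [descentMoment, descentSum, Fintype.card_perm]

lemma descentMoment_succ_left (n t : ℕ) :
    descentMoment (n + 1) t =
      ((n + 2 : ℕ) : ℝ) * ∑ j ∈ range (t + 1), stepCoeff (n + 2) t j * descentMoment n (t - j) := by
  have step (σ : Equiv.Perm (Fin (n + 1))) :
      (descentCount σ + 1) • ((descentCount σ : ℝ) - (n + 1 : ℕ) / 2) ^ (2 * t) +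
          (n - descentCount σ + 1) • (((descentCount σ + 1 : ℕ) : ℝ) - (n + 1 : ℕ) / 2) ^ (2 * t) =
        ((n + 2 : ℕ) : ℝ) * ∑ j ∈ range (t + 1),
          stepCoeff (n + 2) t j * ((descentCount σ : ℝ) - n / 2) ^ (2 * (t - j)) := by
    rw [← step_pow_two_mul (by lia), nsmul_eq_mul, nsmul_eq_mul]
    push_cast [Nat.cast_sub (descentCount_le σ)]
    ring
  simp_rw [descentMoment]
  rw [descentSum_succ]
  simp_rw [descentSum, step, mul_sum]
  rw [sum_comm]

lemma descentMoment_succ_right_le (n t : ℕ) :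
    descentMoment n (t + 1) ≤ (n / 2) ^ 2 * descentMoment n t := by
  simp_rw [descentMoment, descentSum, mul_sum]
  refine sum_le_sum fun σ _ => ?_
  have hσ : (descentCount σ : ℝ) ≤ n := mod_cast descentCount_le σ
  have hdev : ((descentCount σ : ℝ) - n / 2) ^ 2 ≤ (n / 2) ^ 2 :=
    sq_le_sq' (by linarith [(descentCount σ).cast_nonneg (α := ℝ)]) (by linarith)
  rw [mul_add_one, pow_add, mul_comm]
  exact mul_le_mul_of_nonneg_right hdev ((even_two_mul t).pow_nonneg _)

end DescentMoment

section GaussianMoment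

open scoped Nat

/-- The `2 * t`-th moment of the centred normal distribution with variance `v`. At `t = 0` the
truncated `2 * t - 1` is `0`, and `0‼ = 1` stands in for `(-1)‼`. -/
noncomputable def gaussianMoment (v : ℝ) (t : ℕ) : ℝ :=
  v ^ t * (2 * t - 1)‼

lemma gaussianMoment_zero (v : ℝ) : gaussianMoment v 0 = 1 := by
  simp [gaussianMoment]

lemma gaussianMoment_succ (v : ℝ) (t : ℕ) :
    gaussianMoment v (t + 1) = v * (2 * t + 1) * gaussianMoment v t := by
  rw [gaussianMoment, gaussianMoment, show 2 * (t + 1) - 1 = 2 * t + 1 by lia,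
    Nat.doubleFactorial_add_one]
  push_cast
  ring

lemma gaussianMoment_nonneg {v : ℝ} (hv : 0 ≤ v) (t : ℕ) : 0 ≤ gaussianMoment v t := by
  unfold gaussianMoment
  positivity

lemma gaussianMoment_mul (a v : ℝ) (t : ℕ) :
    gaussianMoment (a * v) t = a ^ t * gaussianMoment v t := by
  rw [gaussianMoment, gaussianMoment, mul_pow, mul_assoc]

lemma two_pow_mul_factorial_mul_doubleFactorial (n : ℕ) :
    2 ^ n * n ! * (2 * n - 1)‼ = (2 * n)! := by
  cases n with
  | zero => rfl
  | succ n =>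
    rw [← Nat.doubleFactorial_two_mul]
    exact (Nat.factorial_eq_mul_doubleFactorial _).symm

lemma choose_two_mul_mul_doubleFactorial (s j : ℕ) :
    (2 * (j + s)).choose (2 * j) * ((2 * s - 1)‼ * (2 * j - 1)‼) =
      (j + s).choose j * (2 * (j + s) - 1)‼ := by
  have hadd (a b : ℕ) : (a + b).choose a * a ! * b ! = (a + b)! := by
    rw [Nat.choose_symm_add, Nat.add_choose_mul_factorial_mul_factorial]
  have hpos : 0 < 2 ^ (j + s) * (j ! * s !) := by positivity
  refine Nat.eq_of_mul_eq_mul_right hpos ?_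
  calc (2 * (j + s)).choose (2 * j) * ((2 * s - 1)‼ * (2 * j - 1)‼) * (2 ^ (j + s) * (j ! * s !))
      = (2 * j + 2 * s).choose (2 * j) * (2 ^ j * j ! * (2 * j - 1)‼) *
          (2 ^ s * s ! * (2 * s - 1)‼) := by rw [mul_add]; ring
    _ = (2 * (j + s))! := by
      rw [two_pow_mul_factorial_mul_doubleFactorial, two_pow_mul_factorial_mul_doubleFactorial,
        hadd, mul_add]
    _ = 2 ^ (j + s) * ((j + s).choose j * j ! * s !) * (2 * (j + s) - 1)‼ := by
      rw [hadd, two_pow_mul_factorial_mul_doubleFactorial]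
    _ = (j + s).choose j * (2 * (j + s) - 1)‼ * (2 ^ (j + s) * (j ! * s !)) := by ring

/-- The ratio of `(2 * t).choose (2 * j) * (1 / 4) ^ j * gaussianMoment (N / 12) (t - j)`, the
contribution of the `2 * j`-th power of the step size `1 / 2`, to `gaussianMoment (N / 12) t`. -/
noncomputable def momentRatio (N : ℝ) (t j : ℕ) : ℝ :=
  t.choose j * (3 / N) ^ j / (2 * j - 1)‼

lemma momentRatio_nonneg {N : ℝ} (hN : 0 ≤ N) (t j : ℕ) : 0 ≤ momentRatio N t j := by
  unfold momentRatio
  positivity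

lemma momentRatio_eq_zero_of_lt (N : ℝ) {t j : ℕ} (h : t < j) : momentRatio N t j = 0 := by
  simp [momentRatio, Nat.choose_eq_zero_of_lt h]

variable {N : ℝ} {t j : ℕ}

lemma choose_even_mul_gaussianMoment_sub (hN : N ≠ 0) (hj : j ≤ t) :
    (2 * t).choose (2 * j) * (1 / 4) ^ j * gaussianMoment (N / 12) (t - j) =
      momentRatio N t j * gaussianMoment (N / 12) t := by
  obtain ⟨s, rfl⟩ := Nat.exists_eq_add_of_le hj
  have hchoose : ((2 * (j + s)).choose (2 * j) : ℝ) * ((2 * s - 1)‼ * (2 * j - 1)‼) =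
      (j + s).choose j * (2 * (j + s) - 1)‼ :=
    mod_cast choose_two_mul_mul_doubleFactorial s j
  have hscale : (1 / 4 : ℝ) ^ j = (3 / N) ^ j * (N / 12) ^ j := by
    rw [← mul_pow]
    congr 1
    field_simp
    norm_num
  have hfac : ((2 * j - 1)‼ : ℝ) ≠ 0 := by positivity
  rw [Nat.add_sub_cancel_left, gaussianMoment, gaussianMoment, momentRatio, hscale, pow_add,
    div_mul_eq_mul_div, eq_div_iff hfac]
  linear_combination (3 / N) ^ j * (N / 12) ^ j * (N / 12) ^ s * hchoose

/- Gaussian integration by parts, one coefficient at a time. -/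
lemma choose_odd_mul_gaussianMoment_sub (hN : N ≠ 0) (hj : j < t) :
    (2 * t).choose (2 * j + 1) / N * (1 / 4) ^ j * gaussianMoment (N / 12) (t - j) =
      2 * (j + 1) / 3 * momentRatio N t (j + 1) * gaussianMoment (N / 12) t := by
  obtain ⟨s, rfl⟩ := Nat.exists_eq_add_of_lt hj
  have hchoose : ((2 * (j + s + 1)).choose (2 * (j + 1)) : ℝ) * (2 * j + 2) =
      (2 * (j + s + 1)).choose (2 * j + 1) * (2 * s + 1) := by
    have h := Nat.choose_succ_right_eq (2 * (j + s + 1)) (2 * j + 1)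
    rw [show 2 * (j + s + 1) - (2 * j + 1) = 2 * s + 1 by lia] at h
    exact_mod_cast h
  have heven := choose_even_mul_gaussianMoment_sub hN (t := j + s + 1) (j := j + 1) hj
  rw [show j + s + 1 - (j + 1) = s by lia] at heven
  rw [show j + s + 1 - j = s + 1 by lia, gaussianMoment_succ, mul_assoc (2 * (j + 1) / 3 : ℝ),
    ← heven]
  field_simp
  linear_combination -3 * (1 / 4) ^ j * gaussianMoment (N / 12) s * hchoose

lemma sum_stepCoeff_mul_gaussianMoment {N : ℕ} (hN : N ≠ 0) (t : ℕ) :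
    ∑ j ∈ range (t + 1), stepCoeff N t j * gaussianMoment (N / 12) (t - j) =
      (∑ j ∈ range (t + 1), (1 - 2 * j / 3) * momentRatio N t j) * gaussianMoment (N / 12) t := by
  have hN' : (N : ℝ) ≠ 0 := Nat.cast_ne_zero.2 hN
  have hterm : ∀ j ∈ range (t + 1), stepCoeff N t j * gaussianMoment (N / 12) (t - j) =
      (momentRatio N t j - 2 * (j + 1 : ℕ) / 3 * momentRatio N t (j + 1)) *
        gaussianMoment (N / 12) t := by
    intro j hj
    have hj := Nat.le_of_lt_succ (mem_range.1 hj)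
    have hodd : (2 * t).choose (2 * j + 1) / N * (1 / 4) ^ j * gaussianMoment (N / 12) (t - j) =
        2 * (j + 1) / 3 * momentRatio N t (j + 1) * gaussianMoment (N / 12) t := by
      obtain hlt | rfl := hj.lt_or_eq
      · exact choose_odd_mul_gaussianMoment_sub hN' hlt
      · simp [momentRatio_eq_zero_of_lt]
    push_cast
    rw [sub_mul, ← choose_even_mul_gaussianMoment_sub hN' hj, ← hodd, stepCoeff]
    ring
  have hshift := sum_range_succ' (fun j : ℕ => 2 * (j : ℝ) / 3 * momentRatio N t j) (t + 1)
  rw [sum_range_succ, momentRatio_eq_zero_of_lt _ t.lt_succ_self] at hshift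
  simp only [mul_zero, add_zero, Nat.cast_zero, zero_div, zero_mul] at hshift
  rw [sum_congr rfl hterm, ← sum_mul, sum_sub_distrib, ← hshift, ← sum_sub_distrib]
  simp only [sub_mul, one_mul]

lemma sum_mul_momentRatio_le {k : ℕ} (hN : 0 ≤ N) (hk : 2 ≤ k) :
    ∑ j ∈ range (t + 1), (1 - 2 * j / 3) * momentRatio N t j ≤
      ∑ j ∈ range k, (1 - 2 * j / 3) * momentRatio N t j := by
  have hzero : ∀ j ≥ t + 1, (1 - 2 * j / 3) * momentRatio N t j = 0 := fun j hj => by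
    rw [momentRatio_eq_zero_of_lt N hj, mul_zero]
  rw [← eventually_constant_sum hzero (Nat.le_add_left _ k), sum_range_add]
  refine add_le_of_nonpos_right (sum_nonpos fun j _ => ?_)
  have h2 : (2 : ℝ) ≤ (k + j : ℕ) := mod_cast hk.trans (Nat.le_add_right k j)
  exact mul_nonpos_of_nonpos_of_nonneg (by linarith) (momentRatio_nonneg hN t _)

lemma sum_mul_momentRatio_le_one_add_div (hN : 0 ≤ N) (t : ℕ) :
    ∑ j ∈ range (t + 1), (1 - 2 * j / 3) * momentRatio N t j ≤ 1 + t / N := by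
  refine (sum_mul_momentRatio_le hN le_rfl).trans_eq ?_
  simp only [sum_range_succ, sum_range_zero, momentRatio]
  norm_num
  ring

lemma cast_choose_three (t : ℕ) : (t.choose 3 : ℝ) = t * (t - 1) * (t - 2) / 6 := by
  simp [Nat.cast_choose_eq_descPochhammer_div, descPochhammer_succ_right, Nat.factorial]

lemma cubic_nonneg (hN : 6 ≤ N) (t : ℕ) :
    0 ≤ N ^ 3 - 2 * t * N ^ 2 + t * (t - 1) * N + 7 / 15 * (t * (t - 1) * (t - 2)) := by
  obtain ht | ht := Nat.lt_or_ge t 6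
  · have hM : 0 ≤ N - 6 := sub_nonneg.2 hN
    interval_cases t <;> norm_num <;> nlinarith [pow_nonneg hM 2, pow_nonneg hM 3]
  · have ht : (6 : ℝ) ≤ t := mod_cast ht
    have hsq : 0 ≤ (N - 6) * (N - t) ^ 2 := mul_nonneg (by linarith) (sq_nonneg _)
    have hrest : 0 ≤ t * (7 / 15 * ((t - 1) * (t - 2)) - 25 / 24 * t : ℝ) :=
      mul_nonneg (by linarith) (by nlinarith)
    linear_combination hsq + 6 * sq_nonneg (N - 13 / 12 * t) + hrest

lemma sum_choose_div_pow_le (hN : 0 ≤ N) (t k : ℕ) :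
    ∑ j ∈ range k, (t.choose j : ℝ) / N ^ j ≤ (1 + 1 / N) ^ t := by
  have hpow : (1 + 1 / N) ^ t = ∑ j ∈ range (t + 1), (t.choose j : ℝ) / N ^ j := by
    rw [add_comm, add_pow]
    refine sum_congr rfl fun j _ => ?_
    rw [one_pow, one_div_pow]
    ring
  have hzero : ∀ j ≥ t + 1, (t.choose j : ℝ) / N ^ j = 0 := fun j hj => by
    rw [Nat.choose_eq_zero_of_lt hj, Nat.cast_zero, zero_div]
  rw [hpow, ← eventually_constant_sum hzero (Nat.le_add_left _ k)]
  exact sum_le_sum_of_subset_of_nonneg (range_subset_range.2 (Nat.le_add_right _ _))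
    fun j _ _ => by positivity

lemma sum_stepCoeff_mul_gaussianMoment_le {N : ℕ} (hN : N ≠ 0) (t : ℕ) :
    ∑ j ∈ range (t + 1), stepCoeff N t j * gaussianMoment (N / 12) (t - j) ≤
      (1 + 1 / N) ^ t * gaussianMoment (N / 12) t := by
  rw [sum_stepCoeff_mul_gaussianMoment hN]
  refine mul_le_mul_of_nonneg_right ?_ (gaussianMoment_nonneg (by positivity) t)
  calc _ ≤ 1 + t * (1 / N : ℝ) :=
        (sum_mul_momentRatio_le_one_add_div N.cast_nonneg t).trans_eq (by ring)
    _ ≤ (1 + 1 / N) ^ t :=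
        one_add_mul_le_pow ((by norm_num : (-2 : ℝ) ≤ 0).trans (by positivity)) t

lemma sum_stepCoeff_succ_mul_gaussianMoment_le {N : ℕ} (hN : 6 ≤ N) (t : ℕ) :
    ∑ j ∈ range t, stepCoeff N t (j + 1) * gaussianMoment (N / 12) (t - (j + 1)) ≤
      (1 + 1 / N) ^ t * gaussianMoment (N / 12) t := by
  have hN6 : (6 : ℝ) ≤ N := mod_cast hN
  have hN0 : (0 : ℝ) < N := by linarith
  have hsum := sum_range_succ' (fun j => stepCoeff N t j * gaussianMoment (N / 12) (t - j)) t
  rw [sum_stepCoeff_mul_gaussianMoment (by lia), stepCoeff_zero_right, Nat.sub_zero] at hsum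
  rw [← sub_eq_of_eq_add hsum, ← sub_mul]
  refine mul_le_mul_of_nonneg_right ?_ (gaussianMoment_nonneg (by positivity) t)
  have hratio : ∑ j ∈ range (t + 1), (1 - 2 * j / 3) * momentRatio N t j ≤
      1 + t / N - t.choose 2 / N ^ 2 - 9 / 5 * (t.choose 3 / N ^ 3) := by
    refine (sum_mul_momentRatio_le hN0.le (by norm_num : 2 ≤ 4)).trans_eq ?_
    simp only [sum_range_succ, sum_range_zero, momentRatio]
    norm_num [Nat.doubleFactorial]
    ring
  have hcubic : 0 ≤ 1 - 2 * (t / N : ℝ) + 2 * (t.choose 2 / N ^ 2) +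
      14 / 5 * (t.choose 3 / N ^ 3) := by
    rw [Nat.cast_choose_two, cast_choose_three]
    refine (div_nonneg (cubic_nonneg hN6 t) (pow_pos hN0 3).le).trans_eq ?_
    field_simp
    ring
  have hbinom := sum_choose_div_pow_le hN0.le t 4
  simp only [sum_range_succ, sum_range_zero, Nat.choose_zero_right, Nat.choose_one_right,
    Nat.cast_one, pow_zero, pow_one, div_one, zero_add] at hbinom
  linear_combination hratio + hcubic + hbinom

end GaussianMoment

section Comparison

open scoped Nat

lemma descentMoment_le_succ_right {n t : ℕ} (hnt : 3 * n ^ 2 ≤ (n + 2) * (2 * t + 1))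
    (h : descentMoment n t ≤ gaussianMoment ((n + 2 : ℕ) / 12) t * (n + 1)!) :
    descentMoment n (t + 1) ≤ gaussianMoment ((n + 2 : ℕ) / 12) (t + 1) * (n + 1)! := by
  have hratio : ((n : ℝ) / 2) ^ 2 ≤ (n + 2 : ℕ) / 12 * (2 * t + 1) := by
    have hcast : (3 : ℝ) * n ^ 2 ≤ (n + 2 : ℕ) * (2 * t + 1) := mod_cast hnt
    linear_combination hcast / 12
  calc descentMoment n (t + 1) ≤ (n / 2) ^ 2 * descentMoment n t := descentMoment_succ_right_le n t
    _ ≤ (n + 2 : ℕ) / 12 * (2 * t + 1) * (gaussianMoment ((n + 2 : ℕ) / 12) t * (n + 1)!) :=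
      mul_le_mul hratio h (descentMoment_nonneg n t) (by positivity)
    _ = _ := by rw [gaussianMoment_succ, mul_assoc (_ / _ * _)]

lemma descentMoment_le_of_le_four {n : ℕ} (hn : n ≤ 4) (t : ℕ) :
    descentMoment n t ≤ gaussianMoment ((n + 2 : ℕ) / 12) t * (n + 1)! := by
  have small : ∀ t ≤ 4, descentMoment n t ≤ gaussianMoment ((n + 2 : ℕ) / 12) t * (n + 1)! := by
    intro t ht
    interval_cases n <;> simp only [descentMoment, descentSum_succ, descentSum_zero] <;>
      interval_cases t <;>
      norm_num [gaussianMoment, Nat.doubleFactorial, Nat.factorial]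
  obtain ht | ht := le_total t 4
  · exact small t ht
  · induction t, ht using Nat.le_induction with
    | base => exact small 4 le_rfl
    | succ t ht ih => exact descentMoment_le_succ_right (by interval_cases n <;> lia) ih

lemma descentMoment_le_succ_left {n t : ℕ} (hn : 4 ≤ n) (htn : 2 * t ≤ 3 * (n + 2) + 2)
    (h : ∀ s, descentMoment n s ≤ gaussianMoment ((n + 2 : ℕ) / 12) s * (n + 1)!) :
    descentMoment (n + 1) t ≤ gaussianMoment ((n + 1 + 2 : ℕ) / 12) t * (n + 1 + 1)! := by
  set N := n + 2 with hN
  have hstep : ∑ j ∈ range (t + 1), stepCoeff N t j * descentMoment n (t - j) ≤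
      (1 + 1 / N) ^ t * gaussianMoment (N / 12) t * (n + 1)! := by
    have hterm {j : ℕ} (hj : 0 ≤ stepCoeff N t j) : stepCoeff N t j * descentMoment n (t - j) ≤
        stepCoeff N t j * gaussianMoment (N / 12) (t - j) * (n + 1)! :=
      (mul_le_mul_of_nonneg_left (h _) hj).trans_eq (mul_assoc _ _ _).symm
    obtain htN | hNt := le_total (2 * t) N
    · refine le_trans ?_ (mul_le_mul_of_nonneg_right
        (sum_stepCoeff_mul_gaussianMoment_le (by lia) t) (Nat.cast_nonneg _))
      rw [sum_mul]
      exact sum_le_sum fun j _ => hterm (stepCoeff_nonneg (by nlinarith))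
    · have hzero : stepCoeff N t 0 * descentMoment n (t - 0) ≤ 0 := by
        refine mul_nonpos_of_nonpos_of_nonneg ?_ (descentMoment_nonneg n _)
        rw [stepCoeff_zero_right, sub_nonpos, one_le_div (by positivity)]
        exact_mod_cast hNt
      rw [sum_range_succ']
      refine (add_le_of_nonpos_right hzero).trans (le_trans ?_ (mul_le_mul_of_nonneg_right
        (sum_stepCoeff_succ_mul_gaussianMoment_le (by lia) t) (Nat.cast_nonneg _)))
      rw [sum_mul]
      exact sum_le_sum fun j _ => hterm (stepCoeff_nonneg (by nlinarith))
  have hvar : ((n + 1 + 2 : ℕ) / 12 : ℝ) = (1 + 1 / N) * (N / 12) := by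
    rw [hN]
    push_cast
    field_simp
    ring
  rw [descentMoment_succ_left, hvar, gaussianMoment_mul, Nat.factorial_succ (n + 1)]
  refine (mul_le_mul_of_nonneg_left hstep N.cast_nonneg).trans_eq ?_
  rw [Nat.cast_mul]
  ring

theorem descentMoment_le (n t : ℕ) :
    descentMoment n t ≤ gaussianMoment ((n + 2 : ℕ) / 12) t * (n + 1)! := by
  induction n generalizing t with
  | zero => exact descentMoment_le_of_le_four (by lia) t
  | succ n ih =>
    obtain hn | hn := Nat.lt_or_ge n 4
    · exact descentMoment_le_of_le_four hn t
    induction t with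
    | zero => simp [descentMoment_zero_right, gaussianMoment_zero]
    | succ t iht =>
      obtain hnt | hnt := le_total (3 * (n + 1) ^ 2) ((n + 1 + 2) * (2 * t + 1))
      · exact descentMoment_le_succ_right hnt iht
      · exact descentMoment_le_succ_left hn (by nlinarith) ih

end Comparison

open Nat in
/-- The `2t`-th central moment of the descent statistic is bounded by the
corresponding moment of the normal distribution with variance `(d+2)/12`. -/
theorem stmt4 (d t : ℕ) :
    (∑ i ∈ Finset.range (d + 1), (eulerian (d + 1) i : ℝ) * ((i : ℝ) - (d : ℝ) / 2) ^ (2 * t))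
      ≤ (((d : ℝ) + 2) / 12) ^ t * ((2 * t - 1)‼ : ℝ) * (Nat.factorial (d + 1) : ℝ) := by
  calc _ = descentMoment d t := by
        simp_rw [← nsmul_eq_mul]
        exact sum_eulerian_smul d fun k => ((k : ℝ) - d / 2) ^ (2 * t)
    _ ≤ gaussianMoment ((d + 2 : ℕ) / 12) t * (d + 1)! := descentMoment_le d t
    _ = _ := by rw [gaussianMoment, Nat.cast_add, Nat.cast_ofNat]
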